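/- arXiv:2110.03839 — 5 statements merged into one kernel-verified Lean document; each statement's English description precedes it below -/
import Mathlib

section
/- For every partition C of R there exist unique within-file partitions and a unique K-partite matching representing it; precisely, the map sending a partition C of R to the tuple (C_1, …, C_K, M), where C_k = {c ∩ R_k : c ∈ C, c ∩ R_k ≠ ∅} and M is the collection of blocks {c ∩ R_k : 1 ≤ k ≤ K, c ∩ R_k ≠ ∅} for c ∈ C, is a bijection from the set of all partitions of R onto the set of tuples (C_1, …, C_K, M) in which C_k is a partition of R_k for each k and M is a partition of C_1 ∪ … ∪ C_K each of whose blocks contains at most one element of each C_k. -/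
/-- A partition of a finite set `S`: a collection of nonempty pairwise disjoint
subsets (blocks) of `S` whose union is `S`. -/
def IsPartitionOf {β : Type*} [DecidableEq β] (S : Finset β) (C : Finset (Finset β)) : Prop :=
  (∀ c ∈ C, c.Nonempty) ∧
  (∀ c ∈ C, ∀ c' ∈ C, c ≠ c' → Disjoint c c') ∧
  C.biUnion id = S

theorem isPartitionOf_iff {β : Type*} [DecidableEq β] (S : Finset β) (C : Finset (Finset β)) :
    IsPartitionOf S C ↔ (∀ c ∈ C, ∃ x, x ∈ c) ∧
      (∀ c ∈ C, ∀ c' ∈ C, ∀ x, x ∈ c → x ∈ c' → c = c') ∧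
      (∀ x, x ∈ S ↔ ∃ c ∈ C, x ∈ c) := by
  unfold IsPartitionOf
  refine and_congr Iff.rfl (and_congr ?_ ?_)
  · constructor
    · intro h c hc c' hc' x hx hx'
      by_contra hne
      exact Finset.disjoint_left.1 (h c hc c' hc' hne) hx hx'
    · intro h c hc c' hc' hne
      exact Finset.disjoint_left.2 fun x hx hx' => hne (h c hc c' hc' x hx hx')
  · rw [Finset.ext_iff]
    simp only [Finset.mem_biUnion, id]
    exact forall_congr' fun x => Iff.comm

theorem mem_pieces {α : Type*} [DecidableEq α] {K : ℕ} (R : Fin K → Finset α) (c s : Finset α) :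
    s ∈ (Finset.univ.image (fun k : Fin K => c ∩ R k)).filter (fun s => s ≠ ∅) ↔
      (∃ k, c ∩ R k = s) ∧ ∃ x, x ∈ s := by
  simp [← Finset.nonempty_iff_ne_empty, Finset.Nonempty]

theorem mem_within {α : Type*} [DecidableEq α] (C : Finset (Finset α)) (r s : Finset α) :
    s ∈ (C.image (fun c => c ∩ r)).filter (fun s => s ≠ ∅) ↔
      (∃ c ∈ C, c ∩ r = s) ∧ ∃ x, x ∈ s := by
  simp [← Finset.nonempty_iff_ne_empty, Finset.Nonempty]

theorem pieces_biUnion {α : Type*} [DecidableEq α] {K : ℕ} (R : Fin K → Finset α) (c : Finset α)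
    (hc : ∀ x ∈ c, ∃ k, x ∈ R k) :
    ((Finset.univ.image (fun k : Fin K => c ∩ R k)).filter (fun s => s ≠ ∅)).biUnion id = c := by
  ext x
  simp only [Finset.mem_biUnion, id, mem_pieces]
  constructor
  · rintro ⟨s, ⟨⟨k, rfl⟩, -⟩, hx⟩
    exact (Finset.mem_inter.1 hx).1
  · intro hx
    obtain ⟨k, hk⟩ := hc x hx
    have := Finset.mem_inter.2 ⟨hx, hk⟩
    exact ⟨_, ⟨⟨k, rfl⟩, x, this⟩, this⟩

/-- The map sending a partition `C` of `R = R_1 ∪ ⋯ ∪ R_K` to the tuple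
`(C_1, …, C_K, M)`, where `C_k = {c ∩ R_k : c ∈ C, c ∩ R_k ≠ ∅}` and `M` has blocks
`{c ∩ R_k : 1 ≤ k ≤ K, c ∩ R_k ≠ ∅}` for `c ∈ C`, is a bijection from the set of all
partitions of `R` onto the set of tuples `(C_1, …, C_K, M)` in which each `C_k` is a
partition of `R_k` and `M` is a partition of `C_1 ∪ ⋯ ∪ C_K` each of whose blocks
contains at most one element of each `C_k`. -/
theorem multifile_partition_bijection {α : Type*} [DecidableEq α] {K : ℕ} (hK : 1 ≤ K)
    (R : Fin K → Finset α)
    (hdisj : ∀ k k' : Fin K, k ≠ k' → Disjoint (R k) (R k')) :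
    Set.BijOn
      (fun C : Finset (Finset α) =>
        ((fun k : Fin K => (C.image (fun c => c ∩ R k)).filter (fun s => s ≠ ∅)),
          C.image (fun c =>
            (Finset.univ.image (fun k : Fin K => c ∩ R k)).filter (fun s => s ≠ ∅))))
      {C : Finset (Finset α) | IsPartitionOf (Finset.univ.biUnion R) C}
      {q : (Fin K → Finset (Finset α)) × Finset (Finset (Finset α)) |
        (∀ k, IsPartitionOf (R k) (q.1 k)) ∧
        IsPartitionOf (Finset.univ.biUnion q.1) q.2 ∧
        (∀ m ∈ q.2, ∀ k, (m ∩ q.1 k).card ≤ 1)} := by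
  have hR : ∀ k k' x, x ∈ R k → x ∈ R k' → k = k' := by
    intro k k' x h h'
    by_contra hne
    exact Finset.disjoint_left.1 (hdisj k k' hne) h h'
  simp only [isPartitionOf_iff]
  refine ⟨?_, ?_, ?_⟩
  · rintro C ⟨hne, hd, hU⟩
    simp only [Finset.mem_biUnion, Finset.mem_univ, true_and] at hU
    refine ⟨fun k => ⟨?_, ?_, ?_⟩, ⟨?_, ?_, ?_⟩, ?_⟩
    · intro s hs
      exact ((mem_within _ _ _).1 hs).2
    · intro s hs s' hs' x hx hx'
      obtain ⟨⟨c, hc, rfl⟩, -⟩ := (mem_within _ _ _).1 hs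
      obtain ⟨⟨c', hc', rfl⟩, -⟩ := (mem_within _ _ _).1 hs'
      rw [hd c hc c' hc' x (Finset.mem_inter.1 hx).1 (Finset.mem_inter.1 hx').1]
    · intro x
      simp only [mem_within]
      constructor
      · intro hx
        obtain ⟨c, hc, hxc⟩ := (hU x).1 ⟨k, hx⟩
        have := Finset.mem_inter.2 ⟨hxc, hx⟩
        exact ⟨_, ⟨⟨c, hc, rfl⟩, x, this⟩, this⟩
      · rintro ⟨s, ⟨⟨c, hc, rfl⟩, -⟩, hx⟩
        exact (Finset.mem_inter.1 hx).2
    · intro m hm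
      obtain ⟨c, hc, rfl⟩ := Finset.mem_image.1 hm
      obtain ⟨x, hx⟩ := hne c hc
      obtain ⟨k, hk⟩ := (hU x).2 ⟨c, hc, hx⟩
      exact ⟨c ∩ R k, (mem_pieces _ _ _).2 ⟨⟨k, rfl⟩, x, Finset.mem_inter.2 ⟨hx, hk⟩⟩⟩
    · intro m hm m' hm' s hs hs'
      obtain ⟨c, hc, rfl⟩ := Finset.mem_image.1 hm
      obtain ⟨c', hc', rfl⟩ := Finset.mem_image.1 hm'
      obtain ⟨⟨k, hk⟩, x, hx⟩ := (mem_pieces _ _ _).1 hs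
      obtain ⟨⟨k', hk'⟩, -⟩ := (mem_pieces _ _ _).1 hs'
      have h1 : x ∈ c := (Finset.mem_inter.1 (hk ▸ hx)).1
      have h2 : x ∈ c' := (Finset.mem_inter.1 (hk' ▸ hx)).1
      rw [hd c hc c' hc' x h1 h2]
    · intro s
      simp only [Finset.mem_biUnion, Finset.mem_univ, true_and, mem_within,
        Finset.exists_mem_image, mem_pieces]
      constructor
      · rintro ⟨k, ⟨c, hc, h⟩, hx⟩
        exact ⟨c, hc, ⟨k, h⟩, hx⟩
      · rintro ⟨c, hc, ⟨k, h⟩, hx⟩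
        exact ⟨k, ⟨c, hc, h⟩, hx⟩
    · intro m hm k
      obtain ⟨c, hc, rfl⟩ := Finset.mem_image.1 hm
      have key : ∀ s ∈ (Finset.univ.image (fun k : Fin K => c ∩ R k)).filter (fun s => s ≠ ∅) ∩
          (C.image (fun c => c ∩ R k)).filter (fun s => s ≠ ∅), s = c ∩ R k := by
        intro s hs
        obtain ⟨h1, h2⟩ := Finset.mem_inter.1 hs
        obtain ⟨⟨j, rfl⟩, x, hx⟩ := (mem_pieces _ _ _).1 h1
        obtain ⟨⟨c', hc', h⟩, -⟩ := (mem_within _ _ _).1 h2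
        have hk : x ∈ R k := (Finset.mem_inter.1 (h ▸ hx)).2
        rw [hR j k x (Finset.mem_inter.1 hx).2 hk]
      exact Finset.card_le_one.2 fun a ha b hb => (key a ha).trans (key b hb).symm
  · have key : ∀ C : Finset (Finset α),
        (∀ x, x ∈ Finset.univ.biUnion R ↔ ∃ c ∈ C, x ∈ c) →
        (C.image (fun c => (Finset.univ.image (fun k : Fin K => c ∩ R k)).filter
          (fun s => s ≠ ∅))).image (fun m => m.biUnion id) = C := by
      intro C hU
      rw [Finset.image_image]
      conv_rhs => rw [← Finset.image_id (s := C)]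
      refine Finset.image_congr fun c hc => ?_
      refine pieces_biUnion R c fun x hx => ?_
      simpa using (hU x).2 ⟨c, hc, hx⟩
    rintro C ⟨-, -, hU⟩ C' ⟨-, -, hU'⟩ h
    rw [← key C hU, ← key C' hU']
    exact congrArg (fun M => M.image (fun m => m.biUnion id)) (congrArg Prod.snd h)
  · rintro ⟨P, M⟩ ⟨hP, ⟨hMne, hMd, hMU⟩, hcard⟩
    simp only [Finset.mem_biUnion, Finset.mem_univ, true_and] at hP hMne hMd hMU hcard
    have hPR : ∀ k s x, s ∈ P k → x ∈ s → x ∈ R k := fun k s x hs hx =>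
      ((hP k).2.2 x).2 ⟨s, hs, hx⟩
    have hu : ∀ k k' s s' x, s ∈ P k → s' ∈ P k' → x ∈ s → x ∈ s' → s = s' := by
      intro k k' s s' x hs hs' hx hx'
      obtain rfl := hR k k' x (hPR _ _ _ hs hx) (hPR _ _ _ hs' hx')
      exact (hP k).2.1 s hs s' hs' x hx hx'
    have hkey : ∀ m ∈ M, ∀ s ∈ m, ∀ k, s ∈ P k → m.biUnion id ∩ R k = s := by
      intro m hm s hs k hsk
      ext x
      simp only [Finset.mem_inter, Finset.mem_biUnion, id]
      constructor
      · rintro ⟨⟨t, ht, hxt⟩, hx⟩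
        obtain ⟨j, hj⟩ := (hMU t).2 ⟨m, hm, ht⟩
        obtain rfl := hR j k x (hPR _ _ _ hj hxt) hx
        rwa [Finset.card_le_one.1 (hcard m hm j) s (Finset.mem_inter.2 ⟨hs, hsk⟩) t
          (Finset.mem_inter.2 ⟨ht, hj⟩)]
      · intro hx
        exact ⟨⟨s, hs, hx⟩, hPR _ _ _ hsk hx⟩
    have hconv : ∀ m ∈ M, ∀ k, (∃ x, x ∈ m.biUnion id ∩ R k) →
        m.biUnion id ∩ R k ∈ m ∧ m.biUnion id ∩ R k ∈ P k := by
      rintro m hm k ⟨x, hx⟩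
      obtain ⟨hx1, hx2⟩ := Finset.mem_inter.1 hx
      obtain ⟨s, hs, hxs⟩ := Finset.mem_biUnion.1 hx1
      obtain ⟨j, hj⟩ := (hMU s).2 ⟨m, hm, hs⟩
      obtain rfl := hR j k x (hPR _ _ _ hj hxs) hx2
      rw [hkey m hm s hs j hj]
      exact ⟨hs, hj⟩
    refine ⟨M.image (fun m => m.biUnion id), ⟨?_, ?_, ?_⟩, ?_⟩
    · intro c hc
      obtain ⟨m, hm, rfl⟩ := Finset.mem_image.1 hc
      obtain ⟨s, hs⟩ := hMne m hm
      obtain ⟨j, hj⟩ := (hMU s).2 ⟨m, hm, hs⟩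
      obtain ⟨x, hx⟩ := (hP j).1 s hj
      exact ⟨x, Finset.mem_biUnion.2 ⟨s, hs, hx⟩⟩
    · intro c hc c' hc' x hx hx'
      obtain ⟨m, hm, rfl⟩ := Finset.mem_image.1 hc
      obtain ⟨m', hm', rfl⟩ := Finset.mem_image.1 hc'
      obtain ⟨s, hs, hxs⟩ := Finset.mem_biUnion.1 hx
      obtain ⟨s', hs', hxs'⟩ := Finset.mem_biUnion.1 hx'
      obtain ⟨j, hj⟩ := (hMU s).2 ⟨m, hm, hs⟩
      obtain ⟨j', hj'⟩ := (hMU s').2 ⟨m', hm', hs'⟩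
      obtain rfl := hu j j' s s' x hj hj' hxs hxs'
      rw [hMd m hm m' hm' s hs hs']
    · intro x
      simp only [Finset.mem_biUnion, Finset.mem_univ, true_and, Finset.exists_mem_image, id]
      constructor
      · rintro ⟨k, hk⟩
        obtain ⟨s, hs, hx⟩ := ((hP k).2.2 x).1 hk
        obtain ⟨m, hm, hsm⟩ := (hMU s).1 ⟨k, hs⟩
        exact ⟨m, hm, s, hsm, hx⟩
      · rintro ⟨m, hm, s, hs, hx⟩
        obtain ⟨j, hj⟩ := (hMU s).2 ⟨m, hm, hs⟩
        exact ⟨j, hPR _ _ _ hj hx⟩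
    · refine Prod.ext ?_ ?_
      · funext k
        ext s
        simp only [mem_within, Finset.exists_mem_image]
        constructor
        · rintro ⟨⟨m, hm, rfl⟩, hx⟩
          exact (hconv m hm k hx).2
        · intro hs
          obtain ⟨m, hm, hsm⟩ := (hMU s).1 ⟨k, hs⟩
          exact ⟨⟨m, hm, hkey m hm s hsm k hs⟩, (hP k).1 s hs⟩
      · dsimp only
        rw [Finset.image_image]
        conv_rhs => rw [← Finset.image_id (s := M)]
        refine Finset.image_congr fun m hm => ?_
        ext s
        simp only [Function.comp, mem_pieces, id]
        constructor
        · rintro ⟨⟨k, rfl⟩, hx⟩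
          exact (hconv m hm k hx).1
        · intro hs
          obtain ⟨j, hj⟩ := (hMU s).2 ⟨m, hm, hs⟩
          exact ⟨⟨j, hkey m hm s hs j hj⟩, (hP j).1 s hj⟩
end

section
/- (Proposition 1) Let n : H → ℕ be an overlap table and for each k set n_k = Σ_{h∈H} h_k n_h. Let V_1, …, V_K be pairwise disjoint finite sets with |V_k| = n_k for every k. Then the number of K-partite matchings of V_1, …, V_K whose overlap table equals n is (∏_{k=1}^{K} n_k!) / (∏_{h∈H} n_h!). -/
namespace KPM

abbrev H (K : ℕ) := {h : Fin K → Bool // h ≠ fun _ => false}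

abbrev L {K : ℕ} (n : (Fin K → Bool) → ℕ) := Σ h : H K, Fin (n h.1)

def IsM {α : Type*} [DecidableEq α] {K : ℕ} (n : (Fin K → Bool) → ℕ) (V : Fin K → Finset α)
    (M : Finset (Finset α)) : Prop :=
  IsPartitionOf (Finset.univ.biUnion V) M ∧
        (∀ m ∈ M, ∀ k, (m ∩ V k).card ≤ 1) ∧
        (∀ h : Fin K → Bool, h ≠ (fun _ => false) →
          (M.filter (fun m => (fun k => decide ((m ∩ V k) ≠ ∅)) = h)).card = n h)

def IsB {α : Type*} [DecidableEq α] {K : ℕ} (n : (Fin K → Bool) → ℕ) (V : Fin K → Finset α)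
    (b : L n → Finset α) : Prop :=
  (∀ s, b s ⊆ Finset.univ.biUnion V) ∧
  (∀ s k, (b s ∩ V k).card = if s.1.1 k then 1 else 0) ∧
  ∀ s s', s ≠ s' → Disjoint (b s) (b s')

section
variable {α : Type*} [DecidableEq α] {K : ℕ} (n : (Fin K → Bool) → ℕ) (V : Fin K → Finset α)

lemma card_slots (k : Fin K) (hcard : (V k).card =
      ∑ h ∈ Finset.univ.filter (fun h : Fin K → Bool => h ≠ fun _ => false),
        if h k then n h else 0) :
    Fintype.card {s : L n // s.1.1 k = true} = (V k).card := by
  rw [hcard, Finset.sum_subtype (p := fun h : Fin K → Bool => h ≠ fun _ => false) _ (by simp),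
    Fintype.card_subtype, Finset.card_filter, Fintype.sum_sigma]
  refine Finset.sum_congr rfl fun h _ => ?_
  by_cases hk : h.1 k = true <;> simp [hk]

def mkB (φ : ∀ k, {s : L n // s.1.1 k = true} ↪ {a // a ∈ V k}) (s : L n) : Finset α :=
  (Finset.univ : Finset {k // s.1.1 k = true}).image (fun k => (φ k.1 ⟨s, k.2⟩ : α))

lemma mem_mkB (φ : ∀ k, {s : L n // s.1.1 k = true} ↪ {a // a ∈ V k}) (s : L n) (a : α) :
    a ∈ mkB n V φ s ↔ ∃ k, ∃ h : s.1.1 k = true, (φ k ⟨s, h⟩ : α) = a := by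
  simp [mkB]

variable (hdisj : ∀ k k' : Fin K, k ≠ k' → Disjoint (V k) (V k'))

include hdisj in
lemma eq_of_mem {k k' : Fin K} {a : α} (h : a ∈ V k) (h' : a ∈ V k') : k = k' := by
  by_contra hne
  exact Finset.disjoint_left.1 (hdisj _ _ hne) h h'

include hdisj in
lemma mkB_inter (φ : ∀ k, {s : L n // s.1.1 k = true} ↪ {a // a ∈ V k}) (s : L n) (k)
    (h : s.1.1 k = true) : mkB n V φ s ∩ V k = {(φ k ⟨s, h⟩ : α)} := by
  ext a
  rw [Finset.mem_inter, mem_mkB, Finset.mem_singleton]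
  constructor
  · rintro ⟨⟨k', h', rfl⟩, ha⟩
    obtain rfl := eq_of_mem V hdisj ha (φ k' ⟨s, h'⟩).2
    rfl
  · rintro rfl
    exact ⟨⟨k, h, rfl⟩, (φ k ⟨s, h⟩).2⟩

include hdisj in
lemma mkB_inter' (φ : ∀ k, {s : L n // s.1.1 k = true} ↪ {a // a ∈ V k}) (s : L n) (k)
    (h : ¬ s.1.1 k = true) : mkB n V φ s ∩ V k = ∅ := by
  ext a
  rw [Finset.mem_inter, mem_mkB]
  constructor
  · rintro ⟨⟨k', h', rfl⟩, ha⟩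
    obtain rfl := eq_of_mem V hdisj ha (φ k' ⟨s, h'⟩).2
    exact absurd h' h
  · simp

include hdisj in
lemma isB_mkB (φ : ∀ k, {s : L n // s.1.1 k = true} ↪ {a // a ∈ V k}) :
    IsB n V (mkB n V φ) := by
  refine ⟨?_, ?_, ?_⟩
  · intro s a ha
    obtain ⟨k, h, rfl⟩ := (mem_mkB ..).1 ha
    exact Finset.mem_biUnion.2 ⟨k, Finset.mem_univ _, (φ k ⟨s, h⟩).2⟩
  · intro s k
    by_cases h : s.1.1 k = true
    · rw [mkB_inter n V hdisj φ s k h]; simp [h]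
    · rw [mkB_inter' n V hdisj φ s k h]; simp [h]
  · intro s s' hne
    rw [Finset.disjoint_left]
    intro a ha ha'
    obtain ⟨k, h, rfl⟩ := (mem_mkB ..).1 ha
    obtain ⟨k', h', e⟩ := (mem_mkB ..).1 ha'
    obtain rfl := eq_of_mem V hdisj (φ k ⟨s, h⟩).2 (e ▸ (φ k' ⟨s', h'⟩).2)
    have := (φ k).injective (Subtype.ext e)
    exact hne (congrArg Subtype.val this).symm

lemma exists_elt {b : L n → Finset α} (hb : IsB n V b) (s : L n) (k)
    (h : s.1.1 k = true) : ∃ a, b s ∩ V k = {a} := by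
  have := hb.2.1 s k
  rw [if_pos h] at this
  exact Finset.card_eq_one.1 this

include hdisj in
lemma card_B (hcard : ∀ k, (V k).card =
      ∑ h ∈ Finset.univ.filter (fun h : Fin K → Bool => h ≠ fun _ => false),
        if h k then n h else 0) :
    Nat.card {b // IsB n V b} = ∏ k, ((V k).card).factorial := by
  have hc : Nat.card (∀ k, {s : L n // s.1.1 k = true} ↪ {a // a ∈ V k}) =
      ∏ k, ((V k).card).factorial := by
    rw [Nat.card_pi]
    refine Finset.prod_congr rfl fun k _ => ?_
    rw [Nat.card_eq_fintype_card, Fintype.card_embedding_eq, card_slots n V k (hcard k),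
      Fintype.card_coe, Nat.descFactorial_self]
  rw [← hc]
  symm
  refine Nat.card_congr (Equiv.ofBijective (fun φ => ⟨mkB n V φ, isB_mkB n V hdisj φ⟩) ⟨?_, ?_⟩)
  · intro φ ψ h
    have h : mkB n V φ = mkB n V ψ := congrArg Subtype.val h
    funext k
    ext ⟨s, hs⟩
    have h1 := mkB_inter n V hdisj φ s k hs
    rw [h, mkB_inter n V hdisj ψ s k hs] at h1
    exact (Finset.singleton_injective h1).symm
  · rintro ⟨b, hb⟩
    choose f hf using fun s k h => exists_elt n V hb s k h
    have hm : ∀ s k h, f s k h ∈ b s ∧ f s k h ∈ V k := fun s k h => by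
      rw [← Finset.mem_inter, hf s k h]; simp
    refine ⟨fun k => ⟨fun s => ⟨f s.1 k s.2, (hm _ _ _).2⟩, ?_⟩, ?_⟩
    · rintro ⟨s, hs⟩ ⟨s', hs'⟩ e
      have e : f s k hs = f s' k hs' := congrArg Subtype.val e
      apply Subtype.ext
      by_contra hne
      exact Finset.disjoint_left.1 (hb.2.2 _ _ hne) (hm s k hs).1 (e ▸ (hm s' k hs').1)
    · apply Subtype.ext
      funext s
      ext a
      simp only [mem_mkB, Function.Embedding.coeFn_mk]
      constructor
      · rintro ⟨k, h, rfl⟩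
        exact (hm s k h).1
      · intro ha
        obtain ⟨k, -, hk⟩ := Finset.mem_biUnion.1 (hb.1 s ha)
        have hak := Finset.mem_inter.2 ⟨ha, hk⟩
        have h : s.1.1 k = true := by
          by_contra h
          have := hb.2.1 s k
          rw [if_neg h, Finset.card_eq_zero] at this
          rw [this] at hak
          simp at hak
        rw [hf s k h] at hak
        exact ⟨k, h, (Finset.mem_singleton.1 hak).symm⟩

lemma pat_of_isB {b : L n → Finset α} (hb : IsB n V b) (s : L n) :
    (fun k => decide ((b s ∩ V k) ≠ ∅)) = s.1.1 := by
  funext k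
  have := hb.2.1 s k
  by_cases h : s.1.1 k = true
  · rw [if_pos h] at this
    rw [h, decide_eq_true_eq]
    intro h0
    simp [h0] at this
  · rw [if_neg h, Finset.card_eq_zero] at this
    simp [this, h]

lemma nonempty_of_pat {m : Finset α} (h : (fun k => decide ((m ∩ V k) ≠ ∅)) ≠ fun _ => false) :
    m.Nonempty := by
  rw [Finset.nonempty_iff_ne_empty]
  rintro rfl
  exact h (by simp)

lemma inj_of_isB {b : L n → Finset α} (hb : IsB n V b) : Function.Injective b := by
  intro s s' e
  by_contra hne
  have := hb.2.2 _ _ hne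
  rw [e, disjoint_self] at this
  have h2 := nonempty_of_pat V (m := b s') (by rw [pat_of_isB n V hb]; exact s'.1.2)
  exact h2.ne_empty this

lemma isM_image (hcard : ∀ k, (V k).card =
      ∑ h ∈ Finset.univ.filter (fun h : Fin K → Bool => h ≠ fun _ => false),
        if h k then n h else 0) {b : L n → Finset α} (hb : IsB n V b) :
    IsM n V (Finset.univ.image b) := by
  refine ⟨⟨?_, ?_, ?_⟩, ?_, ?_⟩
  · simp only [Finset.mem_image, Finset.mem_univ, true_and]
    rintro _ ⟨s, rfl⟩
    exact nonempty_of_pat V (by rw [pat_of_isB n V hb]; exact s.1.2)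
  · simp only [Finset.mem_image, Finset.mem_univ, true_and]
    rintro _ ⟨s, rfl⟩ _ ⟨s', rfl⟩ hne
    exact hb.2.2 _ _ (fun e => hne (by rw [e]))
  · apply Finset.Subset.antisymm
    · intro a
      simp only [Finset.mem_biUnion, Finset.mem_image, Finset.mem_univ, true_and, id]
      rintro ⟨_, ⟨s, rfl⟩, ha⟩
      simpa using hb.1 s ha
    · rw [Finset.biUnion_subset]
      intro k _
      have hsub : (Finset.univ.biUnion fun s => b s ∩ V k) ⊆ V k := by
        rw [Finset.biUnion_subset]
        exact fun s _ => Finset.inter_subset_right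
      have hc : (Finset.univ.biUnion fun s => b s ∩ V k).card = (V k).card := by
        rw [Finset.card_biUnion, ← card_slots n V k (hcard k), Fintype.card_subtype,
          Finset.card_filter]
        · exact Finset.sum_congr rfl fun s _ => hb.2.1 s k
        · intro s _ s' _ hne
          exact (hb.2.2 s s' hne).mono Finset.inter_subset_left Finset.inter_subset_left
      rw [← Finset.eq_of_subset_of_card_le hsub hc.ge]
      intro a
      simp only [Finset.mem_biUnion, Finset.mem_image, Finset.mem_univ, true_and, id,
        Finset.mem_inter]
      rintro ⟨s, ha, _⟩
      exact ⟨_, ⟨s, rfl⟩, ha⟩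
  · simp only [Finset.mem_image, Finset.mem_univ, true_and]
    rintro _ ⟨s, rfl⟩ k
    rw [hb.2.1 s k]
    split_ifs <;> simp
  · intro h hh
    have : (Finset.univ.image b).filter (fun m => (fun k => decide ((m ∩ V k) ≠ ∅)) = h) =
        (Finset.univ : Finset (Fin (n h))).image (fun i => b ⟨⟨h, hh⟩, i⟩) := by
      ext m
      simp only [Finset.mem_filter, Finset.mem_image, Finset.mem_univ, true_and]
      constructor
      · rintro ⟨⟨s, rfl⟩, hp⟩
        rw [pat_of_isB n V hb] at hp
        obtain ⟨⟨h', hh'⟩, i⟩ := s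
        obtain rfl : h' = h := hp
        exact ⟨i, rfl⟩
      · rintro ⟨i, rfl⟩
        exact ⟨⟨_, rfl⟩, pat_of_isB n V hb _⟩
    rw [this, Finset.card_image_of_injective]
    · simp
    · intro i j e
      have := inj_of_isB n V hb e
      simpa using this

abbrev MH (M : Finset (Finset α)) (h : Fin K → Bool) : Finset (Finset α) :=
  M.filter (fun m => (fun k => decide ((m ∩ V k) ≠ ∅)) = h)

lemma isB_of_emb {M : Finset (Finset α)} (hM : IsM n V M)
    (e : ∀ h : H K, Fin (n h.1) ↪ {m // m ∈ MH V M h.1}) :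
    IsB n V (fun s => (e s.1 s.2 : Finset α)) ∧
      Finset.univ.image (fun s : L n => (e s.1 s.2 : Finset α)) = M := by
  have hmem : ∀ s : L n, (e s.1 s.2 : Finset α) ∈ M := fun s =>
    (Finset.mem_filter.1 (e s.1 s.2).2).1
  have hpat : ∀ s : L n, (fun k => decide (((e s.1 s.2 : Finset α) ∩ V k) ≠ ∅)) = s.1.1 := fun s =>
    (Finset.mem_filter.1 (e s.1 s.2).2).2
  have hinj : ∀ s s' : L n, (e s.1 s.2 : Finset α) = e s'.1 s'.2 → s = s' := by
    intro s s' he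
    have h1 : s.1.1 = s'.1.1 := by rw [← hpat s, ← hpat s', he]
    obtain ⟨⟨h, hh⟩, i⟩ := s
    obtain ⟨⟨h', hh'⟩, i'⟩ := s'
    obtain rfl : h = h' := h1
    have := (e ⟨h, hh⟩).injective (Subtype.ext he)
    exact congrArg (Sigma.mk (⟨h, hh⟩ : H K)) this
  refine ⟨⟨?_, ?_, ?_⟩, ?_⟩
  · intro s
    rw [← hM.1.2.2]
    exact Finset.subset_biUnion_of_mem id (hmem s)
  · intro s k
    have h1 := hM.2.1 _ (hmem s) k
    have h2 := congrFun (hpat s) k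
    by_cases h : s.1.1 k = true
    · rw [if_pos h]
      rw [h, decide_eq_true_eq] at h2
      have := Finset.card_pos.2 (Finset.nonempty_iff_ne_empty.2 h2)
      exact le_antisymm h1 this
    · rw [if_neg h]
      simp only [Bool.not_eq_true] at h
      rw [h, decide_eq_false_iff_not, not_not] at h2
      rw [h2, Finset.card_empty]
  · intro s s' hne
    exact hM.1.2.1 _ (hmem s) _ (hmem s') (fun h => hne (hinj _ _ h))
  · ext m
    simp only [Finset.mem_image, Finset.mem_univ, true_and]
    constructor
    · rintro ⟨s, rfl⟩
      exact hmem s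
    · intro hm
      have hp : (fun k => decide ((m ∩ V k) ≠ ∅)) ≠ fun _ => false := by
        intro h0
        obtain ⟨a, ha⟩ := hM.1.1 m hm
        have : a ∈ Finset.univ.biUnion V := by
          rw [← hM.1.2.2]
          exact Finset.mem_biUnion.2 ⟨m, hm, ha⟩
        obtain ⟨k, -, hk⟩ := Finset.mem_biUnion.1 this
        have h1 := congrFun h0 k
        rw [decide_eq_false_iff_not, not_not] at h1
        have := Finset.mem_inter.2 ⟨ha, hk⟩
        rw [h1] at this
        simp at this
      have hb := (Fintype.bijective_iff_injective_and_card (e ⟨_, hp⟩)).2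
        ⟨(e ⟨_, hp⟩).injective, by
          rw [Fintype.card_fin, Fintype.card_coe]; exact (hM.2.2 _ hp).symm⟩
      obtain ⟨i, hi⟩ := hb.2 ⟨m, Finset.mem_filter.2 ⟨hm, rfl⟩⟩
      exact ⟨⟨⟨_, hp⟩, i⟩, congrArg Subtype.val hi⟩

lemma card_fiber {M : Finset (Finset α)} (hM : IsM n V M) :
    Nat.card {b // IsB n V b ∧ Finset.univ.image b = M} = ∏ h : H K, (n h.1).factorial := by
  have hc : Nat.card (∀ h : H K, Fin (n h.1) ↪ {m // m ∈ MH V M h.1}) =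
      ∏ h : H K, (n h.1).factorial := by
    rw [Nat.card_pi]
    refine Finset.prod_congr rfl fun h _ => ?_
    rw [Nat.card_eq_fintype_card, Fintype.card_embedding_eq, Fintype.card_fin,
      Fintype.card_coe, hM.2.2 h.1 h.2, Nat.descFactorial_self]
  rw [← hc]
  symm
  refine Nat.card_congr (Equiv.ofBijective (fun e => ⟨_, isB_of_emb n V hM e⟩) ⟨?_, ?_⟩)
  · intro e e' he
    funext h
    apply Function.Embedding.ext
    intro i
    exact Subtype.ext (congrFun (congrArg Subtype.val he) ⟨h, i⟩)
  · rintro ⟨b, hb, hi⟩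
    refine ⟨fun h => ⟨fun i => ⟨b ⟨h, i⟩, Finset.mem_filter.2 ⟨?_, pat_of_isB n V hb _⟩⟩, ?_⟩, ?_⟩
    · rw [← hi]
      exact Finset.mem_image_of_mem _ (Finset.mem_univ _)
    · intro i j hij
      have := inj_of_isB n V hb (congrArg Subtype.val hij)
      simpa using this
    · rfl

include hdisj in
lemma count (hcard : ∀ k, (V k).card =
      ∑ h ∈ Finset.univ.filter (fun h : Fin K → Bool => h ≠ fun _ => false),
        if h k then n h else 0) :
    Nat.card {M // IsM n V M} * ∏ h : H K, (n h.1).factorial = ∏ k, ((V k).card).factorial := by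
  have hfin : {M | IsM n V M}.Finite := by
    refine (Finset.finite_toSet (Finset.univ.biUnion V).powerset.powerset).subset ?_
    intro M hM
    simp only [Finset.mem_coe, Finset.mem_powerset]
    intro m hm
    rw [Finset.mem_powerset, ← hM.1.2.2]
    exact Finset.subset_biUnion_of_mem id hm
  haveI : Finite {M // IsM n V M} := hfin
  haveI := Fintype.ofFinite {M // IsM n V M}
  rw [← card_B n V hdisj hcard]
  let f : {b // IsB n V b} → {M // IsM n V M} :=
    fun b => ⟨Finset.univ.image b.1, isM_image n V hcard b.2⟩
  have hpos : Nat.card {b // IsB n V b} ≠ 0 := by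
    rw [card_B n V hdisj hcard]
    exact Finset.prod_ne_zero_iff.2 fun k _ => Nat.factorial_ne_zero _
  haveI : Finite {b // IsB n V b} := Nat.finite_of_card_ne_zero hpos
  rw [← Nat.card_congr (Equiv.sigmaFiberEquiv f), Nat.card_sigma]
  rw [Finset.sum_congr rfl (g := fun _ => ∏ h : H K, (n h.1).factorial)]
  · simp [Nat.card_eq_fintype_card]
  · rintro ⟨M, hM⟩ _
    rw [← card_fiber n V hM]
    refine Nat.card_congr ?_
    refine (Equiv.subtypeEquivRight fun b => ?_).trans
      (Equiv.subtypeSubtypeEquivSubtypeInter (IsB n V) (fun b => Finset.univ.image b = M))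
    exact Subtype.ext_iff
end

end KPM

/-- (Proposition 1) Let `n : H → ℕ` be an overlap table (where
`H = {0,1}^K \ {0}` is the set of nonzero inclusion patterns), let
`n_k = Σ_{h ∈ H} h_k n_h`, and let `V_1, …, V_K` be pairwise disjoint finite sets with
`|V_k| = n_k`.  Then the number of `K`-partite matchings of `V_1, …, V_K` (partitions of
`V_1 ∪ ⋯ ∪ V_K` whose blocks contain at most one element of each `V_k`) whose overlap
table equals `n` is `(∏_k n_k!) / (∏_{h ∈ H} n_h!)`. -/
theorem kpartite_matching_count {α : Type*} [DecidableEq α] {K : ℕ} (hK : 1 ≤ K)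
    (n : (Fin K → Bool) → ℕ) (V : Fin K → Finset α)
    (hdisj : ∀ k k' : Fin K, k ≠ k' → Disjoint (V k) (V k'))
    (hcard : ∀ k, (V k).card =
      ∑ h ∈ Finset.univ.filter (fun h : Fin K → Bool => h ≠ fun _ => false),
        if h k then n h else 0) :
    (Set.ncard {M : Finset (Finset α) |
        IsPartitionOf (Finset.univ.biUnion V) M ∧
        (∀ m ∈ M, ∀ k, (m ∩ V k).card ≤ 1) ∧
        (∀ h : Fin K → Bool, h ≠ (fun _ => false) →
          (M.filter (fun m => (fun k => decide ((m ∩ V k) ≠ ∅)) = h)).card = n h)} : ℚ) =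
      (∏ k, ((Nat.factorial (V k).card : ℚ))) /
        ∏ h ∈ Finset.univ.filter (fun h : Fin K → Bool => h ≠ fun _ => false),
          ((Nat.factorial (n h) : ℚ)) := by
  have h := KPM.count n V hdisj hcard
  rw [eq_div_iff (Finset.prod_ne_zero_iff.2 fun h _ => by
    exact_mod_cast Nat.factorial_ne_zero _),
    Finset.prod_subtype (p := fun h : Fin K → Bool => h ≠ fun _ => false) _ (by simp)]
  exact_mod_cast h
end

section
/- Let C be a partition of R containing a singleton block {j} with j ∈ R_k, and containing another block c ≠ {j} with c ∩ R_k ≠ ∅; set d = |c ∩ R_k| and n = |C|. Let C' = (C \ {{j}, c}) ∪ {c ∪ {j}} be the partition obtained by merging {j} into c. Then g(C')/g(C) = [P(n−1)/P(n)] · [(n−1+α₀)/n] · [1/(n_{1_k}(C) − 1 + α_{1_k})] · [(d+1) p_k(d+1)] / [p_k(d) p_k(1)], where 1_k ∈ H is the pattern with k-th entry 1 and all other entries 0. -/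
/-- The inclusion pattern of a block `c`: `h(c)_k = 1` iff `c ∩ R_k ≠ ∅`. -/
def patternOf {α : Type*} [DecidableEq α] {K : ℕ} (R : Fin K → Finset α)
    (c : Finset α) : Fin K → Bool := fun k => decide ((c ∩ R k) ≠ ∅)

/-- `H = {0,1}^K \ {(0,…,0)}`, the set of nonzero inclusion patterns. -/
def Hset (K : ℕ) : Finset (Fin K → Bool) :=
  Finset.univ.filter (fun h => h ≠ fun _ => false)

/-- The inclusion pattern `1_k` with `k`-th entry `1` and all other entries `0`. -/
def onePat {K : ℕ} (k : Fin K) : Fin K → Bool := fun k' => decide (k' = k)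

/-- The structured prior density
`g_R(C) = P(n(C)) · n(C)! · (Γ(α₀)/Γ(n(C)+α₀)) · ∏_{h∈H} Γ(n_h(C)+α_h)/Γ(α_h) ·
∏_k (1/|R_k|!) ∏_{c ∈ C, c ∩ R_k ≠ ∅} |c ∩ R_k|! p_k(|c ∩ R_k|)`. -/
noncomputable def priorDensity {α : Type*} [DecidableEq α] {K : ℕ} (R : Fin K → Finset α)
    (P : ℕ → ℝ) (p : Fin K → ℕ → ℝ) (a : (Fin K → Bool) → ℝ)
    (C : Finset (Finset α)) : ℝ :=
  P C.card * (Nat.factorial C.card : ℝ) *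
    (Real.Gamma (∑ h ∈ Hset K, a h) /
      Real.Gamma ((C.card : ℝ) + ∑ h ∈ Hset K, a h)) *
    (∏ h ∈ Hset K,
      Real.Gamma (((C.filter (fun c => patternOf R c = h)).card : ℝ) + a h) /
        Real.Gamma (a h)) *
    ∏ k, ((1 / (Nat.factorial (R k).card : ℝ)) *
      ∏ c ∈ C.filter (fun c => (c ∩ R k) ≠ ∅),
        ((Nat.factorial (c ∩ R k).card : ℝ) * p k ((c ∩ R k).card)))

/-- Merging a singleton block `{j}` (with `j ∈ R_k`) into another block `c` with
`c ∩ R_k ≠ ∅`: writing `d = |c ∩ R_k|` and `n = |C|`, the ratio of structured prior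
densities is `g(C')/g(C) = [P(n-1)/P(n)] · [(n-1+α₀)/n] · [1/(n_{1_k}(C)-1+α_{1_k})] ·
[(d+1) p_k(d+1)]/[p_k(d) p_k(1)]`. -/
theorem prior_ratio_merge_into_sharing_block {α : Type*} [DecidableEq α] {K : ℕ}
    (hK : 1 ≤ K) (R : Fin K → Finset α)
    (hne : ∀ k, (R k).Nonempty)
    (hdisj : ∀ k k' : Fin K, k ≠ k' → Disjoint (R k) (R k'))
    (P : ℕ → ℝ) (hP : ∀ m, 0 < P m)
    (p : Fin K → ℕ → ℝ) (hp : ∀ k m, 0 < p k m)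
    (a : (Fin K → Bool) → ℝ) (ha : ∀ h ∈ Hset K, 0 < a h)
    (C : Finset (Finset α)) (hC : IsPartitionOf (Finset.univ.biUnion R) C)
    (j : α) (k : Fin K) (hj : j ∈ R k) (hjC : {j} ∈ C)
    (c : Finset α) (hc : c ∈ C) (hcj : c ≠ {j}) (hck : (c ∩ R k) ≠ ∅) :
    priorDensity R P p a ((C \ {{j}, c}) ∪ {c ∪ {j}}) / priorDensity R P p a C =
      (P (C.card - 1) / P C.card) *
        (((C.card : ℝ) - 1 + ∑ h ∈ Hset K, a h) / (C.card : ℝ)) *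
        (1 / (((C.filter (fun c' => patternOf R c' = onePat k)).card : ℝ) - 1 +
          a (onePat k))) *
        ((((c ∩ R k).card : ℝ) + 1) * p k ((c ∩ R k).card + 1) /
          (p k ((c ∩ R k).card) * p k 1)) := by
  classical
  obtain ⟨hC1, hC2, hC3⟩ := hC
  have hjc : j ∉ c := by
    have := hC2 c hc {j} hjC hcj
    simpa using this
  obtain ⟨D, hD⟩ : ∃ D, D = C \ {{j}, c} := ⟨_, rfl⟩
  have hcD : c ∉ D := by simp [hD]
  have hjD : {j} ∉ insert c D := by
    simp [hD, Ne.symm hcj]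
  have hCeq : C = insert {j} (insert c D) := by
    rw [hD]; ext x
    simp only [Finset.mem_insert, Finset.mem_sdiff, Finset.mem_singleton]
    constructor
    · intro h; tauto
    · rintro (h | h | h)
      · rw [h]; exact hjC
      · rw [h]; exact hc
      · exact h.1
  have hcne : c.Nonempty := hC1 c hc
  have huD : c ∪ {j} ∉ D := by
    intro h
    rw [hD] at h
    simp only [Finset.mem_insert, Finset.mem_sdiff, Finset.mem_singleton] at h
    have hne' : c ∪ {j} ≠ c := by
      intro h'
      apply hjc
      rw [← h']; simp
    have := hC2 _ h.1 c hc hne'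
    obtain ⟨x, hx⟩ := hcne
    exact Finset.disjoint_left.mp this (Finset.mem_union_left _ hx) hx
  have hC'eq : (C \ {{j}, c}) ∪ {c ∪ {j}} = insert (c ∪ {j}) D := by
    rw [← hD, Finset.union_comm]; rfl
  have hjk : ∀ k', k' ≠ k → j ∉ R k' := fun k' hk' h =>
    Finset.disjoint_left.mp (hdisj k' k hk') h hj
  have hpj : patternOf R {j} = onePat k := by
    funext k'
    unfold patternOf onePat
    by_cases hk' : k' = k
    · subst hk'; simp [Finset.singleton_inter_of_mem hj]
    · simp [hk', Finset.singleton_inter_of_notMem (hjk k' hk')]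
  have hint : ∀ k', k' ≠ k → (c ∪ {j}) ∩ R k' = c ∩ R k' := by
    intro k' hk'
    rw [Finset.union_inter_distrib_right, Finset.singleton_inter_of_notMem (hjk k' hk'),
      Finset.union_empty]
  have hintk : (c ∪ {j}) ∩ R k = insert j (c ∩ R k) := by
    rw [Finset.union_inter_distrib_right, Finset.singleton_inter_of_mem hj,
      Finset.union_comm]; rfl
  have hpc : patternOf R (c ∪ {j}) = patternOf R c := by
    funext k'
    unfold patternOf
    by_cases hk' : k' = k
    · subst hk'; rw [hintk]; simp [hck]
    · rw [hint k' hk']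
  have hmem : onePat k ∈ Hset K := by
    simp only [Hset, Finset.mem_filter, Finset.mem_univ, true_and]
    intro h
    have := congrFun h k
    simp [onePat] at this
  have ha0 : 0 < ∑ h ∈ Hset K, a h := Finset.sum_pos ha ⟨_, hmem⟩
  rw [hC'eq]
  clear hC'eq
  have hcard : C.card = D.card + 2 := by
    rw [hCeq, Finset.card_insert_of_notMem hjD, Finset.card_insert_of_notMem hcD]
  have hcard' : (insert (c ∪ {j}) D).card = D.card + 1 := by
    rw [Finset.card_insert_of_notMem huD]
  -- pattern counts
  have hcount : ∀ h, (C.filter (fun c => patternOf R c = h)).card =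
      ((insert (c ∪ {j}) D).filter (fun c => patternOf R c = h)).card +
        (if h = onePat k then 1 else 0) := by
    intro h
    simp only [Finset.card_filter]
    rw [hCeq, Finset.sum_insert hjD, Finset.sum_insert hcD, Finset.sum_insert huD, hpc, hpj]
    simp only [eq_comm (a := onePat k)]
    ring
  have hG : (∏ h ∈ Hset K,
      Real.Gamma (((C.filter (fun c => patternOf R c = h)).card : ℝ) + a h) /
        Real.Gamma (a h)) = (∏ h ∈ Hset K,
      Real.Gamma ((((insert (c ∪ {j}) D).filter (fun c => patternOf R c = h)).card : ℝ) + a h) /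
        Real.Gamma (a h)) * ((((insert (c ∪ {j}) D).filter
          (fun c => patternOf R c = onePat k)).card : ℝ) + a (onePat k)) := by
    rw [← Finset.mul_prod_erase _ _ hmem, ← Finset.mul_prod_erase (Hset K) (fun h =>
      Real.Gamma ((((insert (c ∪ {j}) D).filter (fun c => patternOf R c = h)).card : ℝ) + a h) /
        Real.Gamma (a h)) hmem]
    have e1 : ∀ h ∈ (Hset K).erase (onePat k),
        Real.Gamma (((C.filter (fun c => patternOf R c = h)).card : ℝ) + a h) /
        Real.Gamma (a h) = Real.Gamma ((((insert (c ∪ {j}) D).filter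
          (fun c => patternOf R c = h)).card : ℝ) + a h) / Real.Gamma (a h) := by
      intro h hh
      rw [hcount h, if_neg (Finset.ne_of_mem_erase hh), add_zero]
    rw [Finset.prod_congr rfl e1, hcount (onePat k), if_pos rfl]
    have hpos : (0 : ℝ) < (((insert (c ∪ {j}) D).filter
          (fun c => patternOf R c = onePat k)).card : ℝ) + a (onePat k) :=
      add_pos_of_nonneg_of_pos (Nat.cast_nonneg _) (ha _ hmem)
    rw [Nat.cast_add, Nat.cast_one, add_right_comm, Real.Gamma_add_one hpos.ne']
    ring
  have hGpos : 0 < (∏ h ∈ Hset K,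
      Real.Gamma ((((insert (c ∪ {j}) D).filter (fun c => patternOf R c = h)).card : ℝ) + a h) /
        Real.Gamma (a h)) := by
    apply Finset.prod_pos
    intro h hh
    exact div_pos (Real.Gamma_pos_of_pos
      (add_pos_of_nonneg_of_pos (Nat.cast_nonneg _) (ha _ hh))) (Real.Gamma_pos_of_pos (ha _ hh))
  obtain ⟨F, hF⟩ : ∃ F : Finset (Finset α) → Fin K → ℝ, F = fun C k =>
    ((1 / (Nat.factorial (R k).card : ℝ)) *
      ∏ c ∈ C.filter (fun c => (c ∩ R k) ≠ ∅),
        ((Nat.factorial (c ∩ R k).card : ℝ) * p k ((c ∩ R k).card))) := ⟨_, rfl⟩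
  have hFpos : ∀ C k, 0 < F C k := by
    intro C k
    rw [hF]
    apply mul_pos
    · positivity
    · apply Finset.prod_pos
      intro c _
      exact mul_pos (by positivity) (hp _ _)
  have hFne : ∀ k', k' ≠ k → F C k' = F (insert (c ∪ {j}) D) k' := by
    intro k' hk'
    simp only [hF, Finset.prod_filter]
    rw [hCeq, Finset.prod_insert hjD, Finset.prod_insert hcD, Finset.prod_insert huD,
      hint k' hk', Finset.singleton_inter_of_notMem (hjk k' hk')]
    simp
  have hFk : F (insert (c ∪ {j}) D) k * (p k ((c ∩ R k).card) * p k 1) =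
      F C k * ((((c ∩ R k).card : ℝ) + 1) * p k ((c ∩ R k).card + 1)) := by
    simp only [hF, Finset.prod_filter]
    rw [hCeq, Finset.prod_insert hjD, Finset.prod_insert hcD, Finset.prod_insert huD,
      hintk, Finset.singleton_inter_of_mem hj, if_pos hck, if_pos (by simp), if_pos (by simp),
      Finset.card_insert_of_notMem (by simp [hjc]), Nat.factorial_succ]
    simp only [Finset.card_singleton, Nat.factorial_one]
    push_cast
    ring
  have hFprod : (∏ k, F (insert (c ∪ {j}) D) k) * (p k ((c ∩ R k).card) * p k 1) =
      (∏ k, F C k) * ((((c ∩ R k).card : ℝ) + 1) * p k ((c ∩ R k).card + 1)) := by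
    rw [← Finset.mul_prod_erase _ _ (Finset.mem_univ k),
      ← Finset.mul_prod_erase Finset.univ (F C) (Finset.mem_univ k),
      Finset.prod_congr rfl (fun k' hk' => hFne k' (Finset.ne_of_mem_erase hk')),
      mul_right_comm, hFk, mul_right_comm]
  have hFCpos : 0 < ∏ k, F C k := Finset.prod_pos (fun k _ => hFpos C k)
  have hg : ∀ C, priorDensity R P p a C = P C.card * (Nat.factorial C.card : ℝ) *
    (Real.Gamma (∑ h ∈ Hset K, a h) /
      Real.Gamma ((C.card : ℝ) + ∑ h ∈ Hset K, a h)) *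
    (∏ h ∈ Hset K,
      Real.Gamma (((C.filter (fun c => patternOf R c = h)).card : ℝ) + a h) /
        Real.Gamma (a h)) * ∏ k, F C k := by
    intro C; rw [hF]; rfl
  rw [hg, hg, hG, hcount (onePat k), if_pos rfl, hcard, hcard']
  have hmpos : (0 : ℝ) < (((insert (c ∪ {j}) D).filter
          (fun c => patternOf R c = onePat k)).card : ℝ) + a (onePat k) :=
      add_pos_of_nonneg_of_pos (Nat.cast_nonneg _) (ha _ hmem)
  generalize (∏ k, F C k) = X at *
  generalize (∏ k, F (insert (c ∪ {j}) D) k) = Y at *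
  generalize (∏ h ∈ Hset K,
      Real.Gamma ((((insert (c ∪ {j}) D).filter (fun c => patternOf R c = h)).card : ℝ) + a h) /
        Real.Gamma (a h)) = G at *
  generalize ((insert (c ∪ {j}) D).filter
          (fun c => patternOf R c = onePat k)).card = m at *
  generalize (∑ h ∈ Hset K, a h) = A at *
  generalize D.card = n at *
  have hp1 := hp k (c ∩ R k).card
  have hp2 := hp k 1
  generalize (c ∩ R k).card = d at *
  have hY : Y = X * (((d : ℝ) + 1) * p k (d + 1)) / (p k d * p k 1) := by
    rw [eq_div_iff (by positivity)]; exact hFprod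
  have hnA : (0 : ℝ) < (n : ℝ) + 1 + A := by positivity
  have hGam : Real.Gamma (((n + 2 : ℕ) : ℝ) + A) =
      ((n : ℝ) + 1 + A) * Real.Gamma (((n + 1 : ℕ) : ℝ) + A) := by
    rw [show ((n + 2 : ℕ) : ℝ) + A = ((n : ℝ) + 1 + A) + 1 by push_cast; ring,
      Real.Gamma_add_one hnA.ne']
    push_cast; rfl
  have hg1 : 0 < Real.Gamma (((n + 1 : ℕ) : ℝ) + A) := by
    apply Real.Gamma_pos_of_pos; push_cast; exact hnA
  have hg2 := Real.Gamma_pos_of_pos ha0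
  rw [hY, hGam, Nat.factorial_succ (n + 1), show n + 2 - 1 = n + 1 by omega]
  generalize Real.Gamma (((n + 1 : ℕ) : ℝ) + A) = g1 at *
  generalize Real.Gamma A = g2 at *
  have hP2 := hP (n + 2)
  have hf : (0 : ℝ) < ((n + 1).factorial : ℝ) := by positivity
  generalize ((n + 1).factorial) = f at *
  generalize a (onePat k) = b at *
  rw [show (((m + 1 : ℕ) : ℝ) - 1 + b) = (m : ℝ) + b by push_cast; ring,
    show (((n + 2 : ℕ) : ℝ) - 1 + A) = (n : ℝ) + 1 + A by push_cast; ring]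
  rw [show n + 1 + 1 = n + 2 from rfl]
  push_cast
  have hn2 : (0 : ℝ) < (n : ℝ) + 2 := by positivity
  field_simp
end

section
/- Let C be a partition of R containing a singleton block {j} with j ∈ R_k, and containing another block c with c ∩ R_k = ∅; set n = |C|, let h_c = h(c) be the inclusion pattern of c, and let h' be h_c with its k-th entry changed from 0 to 1 (the inclusion pattern of c ∪ {j}). Let C' = (C \ {{j}, c}) ∪ {c ∪ {j}}. Then g(C')/g(C) = [P(n−1)/P(n)] · [(n−1+α₀)/n] · (n_{h'}(C) + α_{h'}) / [(n_{1_k}(C) − 1 + α_{1_k}) (n_{h_c}(C) − 1 + α_{h_c})], where 1_k ∈ H is the pattern with k-th entry 1 and all other entries 0. -/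
lemma aux_count {α : Type*} [DecidableEq α] {K : ℕ} (R : Fin K → Finset α)
    (D : Finset (Finset α)) (x : Finset α) (hx : x ∉ D) (h : Fin K → Bool) :
    (((insert x D).filter (fun c => patternOf R c = h)).card : ℝ) =
      ((D.filter (fun c => patternOf R c = h)).card : ℝ) + if patternOf R x = h then 1 else 0 := by
  rw [Finset.filter_insert]
  split_ifs with hh
  · rw [Finset.card_insert_of_notMem (by simp [hx])]; push_cast; ring
  · simp

lemma aux_gamma {α : Type*} [DecidableEq α] {K : ℕ} (R : Fin K → Finset α)
    (a : (Fin K → Bool) → ℝ) (ha : ∀ h ∈ Hset K, 0 < a h)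
    (D : Finset (Finset α)) (x : Finset α) (hx : x ∉ D) (hp : patternOf R x ∈ Hset K) :
    (∏ h ∈ Hset K,
      Real.Gamma ((((insert x D).filter (fun c => patternOf R c = h)).card : ℝ) + a h) /
        Real.Gamma (a h)) =
    (((D.filter (fun c => patternOf R c = patternOf R x)).card : ℝ) + a (patternOf R x)) *
    ∏ h ∈ Hset K,
      Real.Gamma (((D.filter (fun c => patternOf R c = h)).card : ℝ) + a h) /
        Real.Gamma (a h) := by
  rw [← Finset.mul_prod_erase _ _ hp, ← Finset.mul_prod_erase (Hset K) (fun h =>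
      Real.Gamma (((D.filter (fun c => patternOf R c = h)).card : ℝ) + a h) /
        Real.Gamma (a h)) hp, ← mul_assoc]
  congr 1
  · rw [aux_count R D x hx, if_pos rfl]
    have := ha _ hp
    rw [add_right_comm, Real.Gamma_add_one (by positivity)]
    ring
  · refine Finset.prod_congr rfl fun h hh => ?_
    rw [aux_count R D x hx, if_neg (Finset.ne_of_mem_erase hh).symm, add_zero]

noncomputable def auxW {α : Type*} [DecidableEq α] {K : ℕ} (R : Fin K → Finset α)
    (p : Fin K → ℕ → ℝ) (x : Finset α) (k : Fin K) : ℝ :=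
  if (x ∩ R k) ≠ ∅ then (Nat.factorial (x ∩ R k).card : ℝ) * p k ((x ∩ R k).card) else 1

lemma aux_F {α : Type*} [DecidableEq α] {K : ℕ} (R : Fin K → Finset α)
    (p : Fin K → ℕ → ℝ) 
    (D : Finset (Finset α)) (x : Finset α) (hx : x ∉ D) :
    (∏ k, ((1 / (Nat.factorial (R k).card : ℝ)) *
      ∏ c ∈ (insert x D).filter (fun c => (c ∩ R k) ≠ ∅),
        ((Nat.factorial (c ∩ R k).card : ℝ) * p k ((c ∩ R k).card)))) =
    (∏ k, auxW R p x k) * 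
    ∏ k, ((1 / (Nat.factorial (R k).card : ℝ)) *
      ∏ c ∈ D.filter (fun c => (c ∩ R k) ≠ ∅),
        ((Nat.factorial (c ∩ R k).card : ℝ) * p k ((c ∩ R k).card))) := by
  rw [← Finset.prod_mul_distrib]
  refine Finset.prod_congr rfl fun k _ => ?_
  rw [Finset.prod_filter, Finset.prod_insert hx, Finset.prod_filter, auxW]
  ring

/-- Merging a singleton block `{j}` (with `j ∈ R_k`) into another block `c` with
`c ∩ R_k = ∅`: writing `n = |C|`, `h_c` for the inclusion pattern of `c` and `h'` for
`h_c` with its `k`-th entry changed to `1` (the pattern of `c ∪ {j}`), the ratio of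
structured prior densities is `g(C')/g(C) = [P(n-1)/P(n)] · [(n-1+α₀)/n] ·
(n_{h'}(C)+α_{h'}) / [(n_{1_k}(C)-1+α_{1_k})(n_{h_c}(C)-1+α_{h_c})]`. -/
theorem prior_ratio_merge_into_nonsharing_block {α : Type*} [DecidableEq α] {K : ℕ}
    (hK : 1 ≤ K) (R : Fin K → Finset α)
    (hne : ∀ k, (R k).Nonempty)
    (hdisj : ∀ k k' : Fin K, k ≠ k' → Disjoint (R k) (R k'))
    (P : ℕ → ℝ) (hP : ∀ m, 0 < P m)
    (p : Fin K → ℕ → ℝ) (hp : ∀ k m, 0 < p k m)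
    (a : (Fin K → Bool) → ℝ) (ha : ∀ h ∈ Hset K, 0 < a h)
    (C : Finset (Finset α)) (hC : IsPartitionOf (Finset.univ.biUnion R) C)
    (j : α) (k : Fin K) (hj : j ∈ R k) (hjC : {j} ∈ C)
    (c : Finset α) (hc : c ∈ C) (hck : (c ∩ R k) = ∅) :
    priorDensity R P p a ((C \ {{j}, c}) ∪ {c ∪ {j}}) / priorDensity R P p a C =
      (P (C.card - 1) / P C.card) *
        (((C.card : ℝ) - 1 + ∑ h ∈ Hset K, a h) / (C.card : ℝ)) *
        ((((C.filter (fun c' =>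
              patternOf R c' = Function.update (patternOf R c) k true)).card : ℝ) +
            a (Function.update (patternOf R c) k true)) /
          (((((C.filter (fun c' => patternOf R c' = onePat k)).card : ℝ) - 1 +
              a (onePat k))) *
            (((C.filter (fun c' => patternOf R c' = patternOf R c)).card : ℝ) - 1 +
              a (patternOf R c)))) := by
  obtain ⟨hCne, hCd, hCu⟩ := hC
  have hcj : c ≠ {j} := by
    rintro rfl
    rw [Finset.singleton_inter_of_mem hj] at hck
    simp at hck
  have hdis : Disjoint c {j} := hCd c hc _ hjC hcj
  have hjc : j ∉ c := by simpa using hdis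
  obtain ⟨D, hD⟩ : ∃ D, D = C \ {{j}, c} := ⟨_, rfl⟩
  have hjcD : {j} ∉ insert c D := by simp [hD, hcj.symm]
  have hcD : c ∉ D := by simp [hD]
  have hCD : C = insert {j} (insert c D) := by
    ext x; simp only [hD, Finset.mem_insert, Finset.mem_sdiff, Finset.mem_singleton]
    constructor
    · intro hx; tauto
    · rintro (rfl | rfl | h)
      · exact hjC
      · exact hc
      · exact h.1
  have huD : c ∪ {j} ∉ D := by
    intro h
    rw [hD, Finset.mem_sdiff] at h
    have h1 : c ∪ {j} ≠ {j} := fun h2 => h.2 (by simp [h2])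
    have := hCd _ h.1 _ hjC h1
    simp at this
  have hC' : (C \ {{j}, c}) ∪ {c ∪ {j}} = insert (c ∪ {j}) D := by
    rw [← hD, Finset.union_comm]; rfl
  have hjk : ∀ k', j ∈ R k' ↔ k' = k := fun k' =>
    ⟨fun h => by
      by_contra hk
      exact Finset.disjoint_left.1 (hdisj k' k hk) h hj, fun h => h ▸ hj⟩
  have hpj : patternOf R {j} = onePat k := by
    funext k'
    by_cases h : k' = k
    · simp [patternOf, onePat, h, Finset.singleton_inter_of_mem hj]
    · simp [patternOf, onePat, h, Finset.singleton_inter_of_notMem (mt (hjk k').1 h)]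
  have hpu : patternOf R (c ∪ {j}) = Function.update (patternOf R c) k true := by
    funext k'
    by_cases h : k' = k
    · subst h
      simp [patternOf, -Finset.union_singleton, Finset.union_inter_distrib_right, Finset.singleton_inter_of_mem hj]
    · simp [patternOf, h, -Finset.union_singleton, Finset.union_inter_distrib_right,
        Finset.singleton_inter_of_notMem (mt (hjk k').1 h)]
  have hpck : patternOf R c k = false := by simp [patternOf, hck]
  have hpc : patternOf R c ∈ Hset K := by
    simp only [Hset, Finset.mem_filter, Finset.mem_univ, true_and]
    intro h
    obtain ⟨x, hx⟩ := hCne c hc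
    have hx' : x ∈ Finset.univ.biUnion R := by
      rw [← hCu]; exact Finset.mem_biUnion.2 ⟨c, hc, hx⟩
    obtain ⟨k', -, hk'⟩ := Finset.mem_biUnion.1 hx'
    have h2 := congrFun h k'
    simp only [patternOf, ne_eq, decide_eq_false_iff_not, not_not] at h2
    have : x ∈ c ∩ R k' := Finset.mem_inter.2 ⟨hx, hk'⟩
    rw [h2] at this
    simp at this
  have h1H : onePat k ∈ Hset K := by
    simp only [Hset, Finset.mem_filter, Finset.mem_univ, true_and]
    intro h
    have := congrFun h k
    simp [onePat] at this
  have huH : Function.update (patternOf R c) k true ∈ Hset K := by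
    simp only [Hset, Finset.mem_filter, Finset.mem_univ, true_and]
    intro h
    have := congrFun h k
    simp at this
  have hc1 : patternOf R c ≠ onePat k := by
    intro h
    have := congrFun h k
    simp [onePat, hpck] at this
  have hcu : patternOf R c ≠ Function.update (patternOf R c) k true := by
    intro h
    have := congrFun h k
    simp [hpck] at this
  have h1u : onePat k ≠ Function.update (patternOf R c) k true := by
    intro h
    simp only [Hset, Finset.mem_filter, Finset.mem_univ, true_and] at hpc
    apply hpc
    funext k'
    by_cases hk : k' = k
    · rw [hk, hpck]
    · have := congrFun h k'
      simpa [onePat, hk] using this.symm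
  have hW : ∏ k', auxW R p (c ∪ {j}) k' = (∏ k', auxW R p {j} k') * ∏ k', auxW R p c k' := by
    rw [← Finset.prod_mul_distrib]
    refine Finset.prod_congr rfl fun k' _ => ?_
    by_cases h : k' = k
    · subst h
      simp [auxW, -Finset.union_singleton, Finset.union_inter_distrib_right, hck]
    · simp [auxW, -Finset.union_singleton, Finset.union_inter_distrib_right,
        Finset.singleton_inter_of_notMem (mt (hjk k').1 h)]
  have hWpos : ∀ x : Finset α, 0 < ∏ k', auxW R p x k' := fun x =>
    Finset.prod_pos fun k' _ => by
      unfold auxW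
      split_ifs
      · have := hp k' (x ∩ R k').card
        positivity
      · exact one_pos
  have hcard : C.card = D.card + 2 := by
    rw [hCD, Finset.card_insert_of_notMem hjcD, Finset.card_insert_of_notMem hcD]
  have hcard' : (insert (c ∪ {j}) D).card = D.card + 1 := Finset.card_insert_of_notMem huD
  have hn1 : ((C.filter (fun c' => patternOf R c' = onePat k)).card : ℝ) =
      ((D.filter (fun c' => patternOf R c' = onePat k)).card : ℝ) + 1 := by
    rw [hCD, aux_count R _ _ hjcD, aux_count R _ _ hcD, if_pos hpj, if_neg hc1, add_zero]
  have hnc : ((C.filter (fun c' => patternOf R c' = patternOf R c)).card : ℝ) =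
      ((D.filter (fun c' => patternOf R c' = patternOf R c)).card : ℝ) + 1 := by
    rw [hCD, aux_count R _ _ hjcD, aux_count R _ _ hcD, hpj, if_pos rfl, if_neg hc1.symm, add_zero]
  have hnu : ((C.filter (fun c' => patternOf R c' =
        Function.update (patternOf R c) k true)).card : ℝ) =
      ((D.filter (fun c' => patternOf R c' =
        Function.update (patternOf R c) k true)).card : ℝ) := by
    rw [hCD, aux_count R _ _ hjcD, aux_count R _ _ hcD, hpj, if_neg hcu, if_neg h1u,
      add_zero, add_zero]
  have hG' := aux_gamma R a ha D _ huD (by rw [hpu]; exact huH)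
  have hG := aux_gamma R a ha (insert c D) {j} hjcD (by rw [hpj]; exact h1H)
  rw [aux_gamma R a ha D c hcD hpc, aux_count R D c hcD, hpj, if_neg hc1, add_zero, ← hCD] at hG
  rw [hpu] at hG'
  have hF' := aux_F R p D _ huD
  have hF := aux_F R p _ _ hjcD
  rw [aux_F R p D c hcD, ← hCD] at hF
  rw [hW] at hF'
  rw [hC']
  unfold priorDensity
  rw [hG, hG', hF, hF', hn1, hnc, hnu, hcard, hcard']
  clear hG hG' hF hF' hn1 hnc hnu hcard hcard' hCD hC' hW hcD hjcD huD hD hCu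
  have hGpos : 0 < ∏ h ∈ Hset K,
      Real.Gamma (((D.filter (fun c => patternOf R c = h)).card : ℝ) + a h) /
        Real.Gamma (a h) := Finset.prod_pos fun h hh => by
    have h0 := ha h hh
    exact div_pos (Real.Gamma_pos_of_pos (by positivity)) (Real.Gamma_pos_of_pos h0)
  have hFpos : 0 < ∏ k, ((1 / (Nat.factorial (R k).card : ℝ)) *
      ∏ c ∈ D.filter (fun c => (c ∩ R k) ≠ ∅),
        ((Nat.factorial (c ∩ R k).card : ℝ) * p k ((c ∩ R k).card))) :=
    Finset.prod_pos fun k' _ => mul_pos (by positivity) (Finset.prod_pos fun x _ => by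
      have := hp k' (x ∩ R k').card
      positivity)
  have hA : 0 < ∑ h ∈ Hset K, a h := Finset.sum_pos ha ⟨_, h1H⟩
  have hW1 := hWpos {j}
  have hW2 := hWpos c
  have ha1 := ha _ h1H
  have hac := ha _ hpc
  have hP1 := hP (D.card + 1)
  have hP2 := hP (D.card + 2)
  generalize (∏ h ∈ Hset K,
      Real.Gamma (((D.filter (fun c => patternOf R c = h)).card : ℝ) + a h) /
        Real.Gamma (a h)) = G at *
  generalize (∏ k, ((1 / (Nat.factorial (R k).card : ℝ)) *
      ∏ c ∈ D.filter (fun c => (c ∩ R k) ≠ ∅),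
        ((Nat.factorial (c ∩ R k).card : ℝ) * p k ((c ∩ R k).card)))) = F at *
  generalize (∏ k', auxW R p {j} k') = W1 at *
  generalize (∏ k', auxW R p c k') = W2 at *
  generalize (∑ h ∈ Hset K, a h) = A at *
  have hΓ : Real.Gamma (((D.card + 2 : ℕ) : ℝ) + A) =
      ((D.card : ℝ) + 1 + A) * Real.Gamma (((D.card + 1 : ℕ) : ℝ) + A) := by
    have : (((D.card + 2 : ℕ) : ℝ) + A) = ((D.card : ℝ) + 1 + A) + 1 := by push_cast; ring
    rw [this, Real.Gamma_add_one (by positivity)]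
    push_cast; rfl
  have hΓ1 : 0 < Real.Gamma (((D.card + 1 : ℕ) : ℝ) + A) :=
    Real.Gamma_pos_of_pos (by positivity)
  have hΓA : 0 < Real.Gamma A := Real.Gamma_pos_of_pos hA
  rw [hΓ, Nat.factorial_succ (D.card + 1), show D.card + 2 - 1 = D.card + 1 from rfl]
  have hfac : (0 : ℝ) < (Nat.factorial (D.card + 1) : ℝ) := by positivity
  generalize Real.Gamma (((D.card + 1 : ℕ) : ℝ) + A) = g1 at *
  generalize (Nat.factorial (D.card + 1)) = f1 at *
  have e1 : (((D.card + 2 : ℕ) : ℝ) - 1 + A) = (D.card : ℝ) + 1 + A := by push_cast; ring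
  have e2 : (((D.card + 1 + 1) * f1 : ℕ) : ℝ) = ((D.card + 2 : ℕ) : ℝ) * f1 := by push_cast; ring
  rw [e1, e2, add_sub_cancel_right, add_sub_cancel_right]
  have e3 : (0 : ℝ) < ((D.card + 2 : ℕ) : ℝ) := by positivity
  have e4 : (0 : ℝ) < (D.card : ℝ) + 1 + A := by positivity
  have e5 : (0 : ℝ) < ((D.filter (fun c' => patternOf R c' = onePat k)).card : ℝ) +
    a (onePat k) := by positivity
  have e6 : (0 : ℝ) < ((D.filter (fun c' => patternOf R c' = patternOf R c)).card : ℝ) +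
    a (patternOf R c) := by positivity
  generalize ((D.filter (fun c' => patternOf R c' = onePat k)).card : ℝ) +
    a (onePat k) = x1 at *
  generalize ((D.filter (fun c' => patternOf R c' = patternOf R c)).card : ℝ) +
    a (patternOf R c) = x2 at *
  generalize ((D.card + 2 : ℕ) : ℝ) = y at *
  generalize (D.card : ℝ) + 1 + A = z at *
  field_simp
end

section
/- Let j ∈ R_k with |R_k| ≥ 2, and let R' = R \ {j} with files R'_l = R_l \ {j}. Let C₀ be any partition of R' and set n₀ = |C₀|. Let C = C₀ ∪ {{j}} be the partition of R obtained by adding j as a new singleton cluster. Then g_R(C)/g_{R'}(C₀) = [P(n₀+1)/P(n₀)] · [(n₀+1)/(n₀+α₀)] · (n_{1_k}(C₀) + α_{1_k}) · p_k(1) / |R_k|, where 1_k ∈ H is the pattern with k-th entry 1 and all other entries 0, and g_R and g_{R'} denote the structured prior density computed with respect to the ground sets R and R' respectively. -/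
/-- Adding a record `j ∈ R_k` (with `|R_k| ≥ 2`) as a new singleton cluster to a
partition `C₀` of `R' = R \ {j}` (with files `R'_l = R_l \ {j}`): writing `n₀ = |C₀|`,
the ratio of structured prior densities computed with respect to the ground sets `R`
and `R'` is `g_R(C₀ ∪ {{j}})/g_{R'}(C₀) = [P(n₀+1)/P(n₀)] · [(n₀+1)/(n₀+α₀)] ·
(n_{1_k}(C₀)+α_{1_k}) · p_k(1) / |R_k|`. -/
theorem prior_ratio_new_singleton_cluster {α : Type*} [DecidableEq α] {K : ℕ}
    (hK : 1 ≤ K) (R : Fin K → Finset α)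
    (hne : ∀ k, (R k).Nonempty)
    (hdisj : ∀ k k' : Fin K, k ≠ k' → Disjoint (R k) (R k'))
    (P : ℕ → ℝ) (hP : ∀ m, 0 < P m)
    (p : Fin K → ℕ → ℝ) (hp : ∀ k m, 0 < p k m)
    (a : (Fin K → Bool) → ℝ) (ha : ∀ h ∈ Hset K, 0 < a h)
    (j : α) (k : Fin K) (hj : j ∈ R k) (hRk : 2 ≤ (R k).card)
    (C₀ : Finset (Finset α))
    (hC₀ : IsPartitionOf (Finset.univ.biUnion (fun l => (R l).erase j)) C₀) :
    priorDensity R P p a (C₀ ∪ {{j}}) /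
        priorDensity (fun l => (R l).erase j) P p a C₀ =
      (P (C₀.card + 1) / P C₀.card) *
        (((C₀.card : ℝ) + 1) / ((C₀.card : ℝ) + ∑ h ∈ Hset K, a h)) *
        (((C₀.filter (fun c =>
            patternOf (fun l => (R l).erase j) c = onePat k)).card : ℝ) +
          a (onePat k)) *
        p k 1 / ((R k).card : ℝ) := by
  classical
  obtain ⟨-, -, hU⟩ := hC₀
  have hcj : ∀ c ∈ C₀, j ∉ c := by
    intro c hc hjc
    have h1 : j ∈ C₀.biUnion id := Finset.mem_biUnion.2 ⟨c, hc, hjc⟩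
    rw [hU] at h1
    simp at h1
  have hint : ∀ c ∈ C₀, ∀ l, c ∩ (R l).erase j = c ∩ R l := by
    intro c hc l
    have := hcj c hc
    ext x
    simp only [Finset.mem_inter, Finset.mem_erase]
    constructor
    · rintro ⟨h1, -, h2⟩
      exact ⟨h1, h2⟩
    · rintro ⟨h1, h2⟩
      exact ⟨h1, fun h => this (h ▸ h1), h2⟩
  have hnot : ({j} : Finset α) ∉ C₀ := fun h => hcj _ h (Finset.mem_singleton_self j)
  have hins : C₀ ∪ {{j}} = insert {j} C₀ := by
    rw [Finset.union_comm]; rfl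
  have hjl : ∀ l, l ≠ k → j ∉ R l := by
    intro l hl h
    exact Finset.disjoint_left.1 (hdisj l k hl) h hj
  have hsk : ({j} : Finset α) ∩ R k = {j} := by
    rw [Finset.singleton_inter_of_mem hj]
  have hsl : ∀ l, l ≠ k → ({j} : Finset α) ∩ R l = ∅ := fun l hl =>
    Finset.singleton_inter_of_notMem (hjl l hl)
  have hpatj : patternOf R {j} = onePat k := by
    funext l
    unfold patternOf onePat
    by_cases hl : l = k
    · subst hl; simp [hsk]
    · simp [hsl l hl, hl]
  have hpat : ∀ c ∈ C₀, patternOf (fun l => (R l).erase j) c = patternOf R c := by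
    intro c hc
    funext l
    simp only [patternOf, hint c hc l]
  have hmem : onePat k ∈ Hset K := by
    simp only [Hset, Finset.mem_filter, Finset.mem_univ, true_and]
    intro h
    have := congrFun h k
    simp [onePat] at this
  have hfilt : ∀ h, C₀.filter (fun c => patternOf (fun l => (R l).erase j) c = h)
      = C₀.filter (fun c => patternOf R c = h) := by
    intro h
    apply Finset.filter_congr
    intro c hc
    rw [hpat c hc]
  have ha0 : 0 < ∑ h ∈ Hset K, a h := Finset.sum_pos ha ⟨_, hmem⟩
  have hcard : (insert {j} C₀).card = C₀.card + 1 := Finset.card_insert_of_notMem hnot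
  -- Gamma product
  have hG : (∏ h ∈ Hset K,
      Real.Gamma ((((insert {j} C₀).filter (fun c => patternOf R c = h)).card : ℝ) + a h) /
        Real.Gamma (a h)) =
      (((C₀.filter (fun c => patternOf R c = onePat k)).card : ℝ) + a (onePat k)) *
      ∏ h ∈ Hset K,
      Real.Gamma (((C₀.filter (fun c => patternOf R c = h)).card : ℝ) + a h) /
        Real.Gamma (a h) := by
    rw [← Finset.mul_prod_erase _ _ hmem, ← Finset.mul_prod_erase (Hset K) (fun h =>
      Real.Gamma (((C₀.filter (fun c => patternOf R c = h)).card : ℝ) + a h) /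
        Real.Gamma (a h)) hmem, ← mul_assoc]
    congr 1
    · rw [Finset.filter_insert, if_pos hpatj, Finset.card_insert_of_notMem
        (fun h => hnot (Finset.mem_filter.1 h).1)]
      have h1 := ha _ hmem
      push_cast
      rw [add_right_comm, Real.Gamma_add_one (by positivity), mul_div_assoc]
    · apply Finset.prod_congr rfl
      intro h hh
      rw [Finset.filter_insert, if_neg]
      rw [hpatj]
      exact (Finset.ne_of_mem_erase hh).symm
  -- file product
  have hF : (∏ l, ((1 / (Nat.factorial (R l).card : ℝ)) *
      ∏ c ∈ (insert {j} C₀).filter (fun c => (c ∩ R l) ≠ ∅),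
        ((Nat.factorial (c ∩ R l).card : ℝ) * p l ((c ∩ R l).card)))) =
      (p k 1 / ((R k).card : ℝ)) *
      ∏ l, ((1 / (Nat.factorial ((R l).erase j).card : ℝ)) *
      ∏ c ∈ C₀.filter (fun c => (c ∩ (R l).erase j) ≠ ∅),
        ((Nat.factorial (c ∩ (R l).erase j).card : ℝ) * p l ((c ∩ (R l).erase j).card))) := by
    have hin : ∀ l, (∏ c ∈ C₀.filter (fun c => (c ∩ (R l).erase j) ≠ ∅),
        ((Nat.factorial (c ∩ (R l).erase j).card : ℝ) * p l ((c ∩ (R l).erase j).card))) =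
        ∏ c ∈ C₀.filter (fun c => (c ∩ R l) ≠ ∅),
        ((Nat.factorial (c ∩ R l).card : ℝ) * p l ((c ∩ R l).card)) := by
      intro l
      apply Finset.prod_congr
      · apply Finset.filter_congr
        intro c hc
        rw [hint c hc]
      · intro c hc
        rw [hint c (Finset.mem_filter.1 hc).1]
    simp only [hin]
    rw [← Finset.mul_prod_erase _ _ (Finset.mem_univ k),
      ← Finset.mul_prod_erase Finset.univ (fun l =>
        ((1 / (Nat.factorial ((R l).erase j).card : ℝ)) *
        ∏ c ∈ C₀.filter (fun c => (c ∩ R l) ≠ ∅),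
        ((Nat.factorial (c ∩ R l).card : ℝ) * p l ((c ∩ R l).card)))) (Finset.mem_univ k),
      ← mul_assoc]
    congr 1
    · rw [Finset.filter_insert, if_pos (by simp [hsk]), Finset.prod_insert
        (fun h => hnot (Finset.mem_filter.1 h).1), hsk, Finset.card_singleton,
        Finset.card_erase_of_mem hj]
      obtain ⟨m, hm⟩ : ∃ m, (R k).card = m + 1 := ⟨(R k).card - 1, by omega⟩
      rw [hm, Nat.factorial_succ, Nat.add_sub_cancel]
      have : (Nat.factorial m : ℝ) ≠ 0 := by positivity
      have : ((m : ℝ) + 1) ≠ 0 := by positivity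
      push_cast
      field_simp
      simp
    · apply Finset.prod_congr rfl
      intro l hl
      have hl' := Finset.ne_of_mem_erase hl
      rw [Finset.filter_insert, if_neg (by simp [hsl l hl']),
        Finset.erase_eq_of_notMem (hjl l hl')]
  have hGpos : 0 < ∏ h ∈ Hset K,
      Real.Gamma (((C₀.filter (fun c => patternOf R c = h)).card : ℝ) + a h) /
        Real.Gamma (a h) := by
    apply Finset.prod_pos
    intro h hh
    have := ha h hh
    exact div_pos (Real.Gamma_pos_of_pos (by positivity)) (Real.Gamma_pos_of_pos this)
  have hFpos : 0 < ∏ l, ((1 / (Nat.factorial ((R l).erase j).card : ℝ)) *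
      ∏ c ∈ C₀.filter (fun c => (c ∩ (R l).erase j) ≠ ∅),
        ((Nat.factorial (c ∩ (R l).erase j).card : ℝ) * p l ((c ∩ (R l).erase j).card))) := by
    apply Finset.prod_pos
    intro l _
    refine mul_pos (by positivity) (Finset.prod_pos fun c _ => mul_pos (by positivity) (hp _ _))
  rw [hins]
  unfold priorDensity
  simp only [hfilt]
  rw [hG, hF, hcard]
  generalize (∏ h ∈ Hset K,
      Real.Gamma (((C₀.filter (fun c => patternOf R c = h)).card : ℝ) + a h) /
        Real.Gamma (a h)) = G at *
  generalize (∏ l, ((1 / (Nat.factorial ((R l).erase j).card : ℝ)) *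
      ∏ c ∈ C₀.filter (fun c => (c ∩ (R l).erase j) ≠ ∅),
        ((Nat.factorial (c ∩ (R l).erase j).card : ℝ) * p l ((c ∩ (R l).erase j).card)))) = F at *
  generalize (∑ h ∈ Hset K, a h) = s at *
  have hs : 0 < (C₀.card : ℝ) + s := by positivity
  rw [Nat.factorial_succ]
  push_cast
  rw [add_right_comm, Real.Gamma_add_one hs.ne']
  have e1 := (hP C₀.card).ne'
  have e2 := (Real.Gamma_pos_of_pos hs).ne'
  have e3 := (Real.Gamma_pos_of_pos ha0).ne'
  have e4 : (Nat.factorial C₀.card : ℝ) ≠ 0 := by positivity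
  have e5 := hGpos.ne'
  have e6 := hFpos.ne'
  have e7 : ((R k).card : ℝ) ≠ 0 := by
    have : (R k).card ≠ 0 := by omega
    exact_mod_cast this
  have e8 := hs.ne'
  field_simp
end
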